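/- Let l > 0, τ > 0, let b : [0,l] × [0,τ] → ℝ be continuously differentiable, and let u : [0,l] × [0,τ] → ℝ be twice continuously differentiable with u(0,t) = 0 for all t ∈ [0,τ]. Then −∫₀^τ ∫₀ˡ ∂/∂x( b(x,t) u_x(x,t) ) · x · (∫ₓˡ u_t(ξ,t) dξ) dx dt = (1/2)∫₀ˡ b(x,τ) u(x,τ)² dx − (1/2)∫₀ˡ b(x,0) u(x,0)² dx − (1/2)∫₀^τ ∫₀ˡ b_t(x,t) u(x,t)² dx dt − ∫₀^τ ∫₀ˡ b_x(x,t) u(x,t) (∫ₓˡ u_t(ξ,t) dξ) dx dt − ∫₀^τ ∫₀ˡ x · b(x,t) u_x(x,t) u_t(x,t) dx dt. -/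

import Mathlib

/-!
For fixed `t`, write `V(x,t) = ∫ₓˡ u_t dξ`, so that `V_x = -u_t` and `V(l,t) = 0`. The function
`x b u_x V - b u V` vanishes at `x = 0` (because `u(0,t) = 0`) and at `x = l`, and its `x`-derivative
is `(b u_x)_x x V - x b u_x u_t - b_x u V + b u u_t`; integrating it over `[0,l]` is the spatial
integration by parts. The remaining term `∫∫ b u u_t` comes from `(b u²)_t = b_t u² + 2 b u u_t`
by exchanging the order of integration.

The derivatives in the statement are only meaningful in the open rectangle, since `b` and `u` are
unconstrained outside the closed one. `core_identity` is therefore stated for functions continuous on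
the whole plane that are related by differentiation in the open rectangle only. These are
obtained from `b`, `u` and their derivatives within the closed rectangle by composing with the
projection of the plane onto the rectangle (`rectExtend`).
-/

/-- Partial derivative in the time (second) variable. -/
noncomputable def pderivT (u : ℝ → ℝ → ℝ) (x t : ℝ) : ℝ := deriv (u x) t

/-- Partial derivative in the space (first) variable. -/
noncomputable def pderivX (u : ℝ → ℝ → ℝ) (x t : ℝ) : ℝ := deriv (fun ξ => u ξ t) x

open Set Filter Topology MeasureTheory

/-- Extension of a function on `[0,l] × [0,τ]` to the plane, constant along the fibres of the
coordinatewise projection onto the rectangle. -/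
noncomputable def rectExtend (l τ : ℝ) (f : ℝ × ℝ → ℝ) (x t : ℝ) : ℝ :=
  f (max 0 (min l x), max 0 (min τ t))

lemma rectExtend_eq {l τ : ℝ} (f : ℝ × ℝ → ℝ) {x t : ℝ} (hx : x ∈ Icc 0 l) (ht : t ∈ Icc 0 τ) :
    rectExtend l τ f x t = f (x, t) := by
  simp [rectExtend, hx.1, hx.2, ht.1, ht.2]

lemma continuous_rectExtend {l τ : ℝ} (hl : 0 < l) (hτ : 0 < τ) {f : ℝ × ℝ → ℝ}
    (hf : ContinuousOn f (Icc 0 l ×ˢ Icc 0 τ)) :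
    Continuous (fun p : ℝ × ℝ => rectExtend l τ f p.1 p.2) := by
  unfold rectExtend
  refine hf.comp_continuous (by fun_prop) fun p => ?_
  simp [hl.le, hτ.le]

lemma rectExtend_hasDerivAt_fst {l τ : ℝ} {f : ℝ × ℝ → ℝ} {x t d : ℝ}
    (hx : x ∈ Ioo 0 l) (ht : t ∈ Ioo 0 τ) (h : HasDerivAt (fun ξ => f (ξ, t)) d x) :
    HasDerivAt (fun ξ => rectExtend l τ f ξ t) d x := by
  refine h.congr_of_eventuallyEq ?_
  filter_upwards [isOpen_Ioo.mem_nhds hx] with ξ hξ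
  exact rectExtend_eq f (Ioo_subset_Icc_self hξ) (Ioo_subset_Icc_self ht)

lemma rectExtend_hasDerivAt_snd {l τ : ℝ} {f : ℝ × ℝ → ℝ} {x t d : ℝ}
    (hx : x ∈ Ioo 0 l) (ht : t ∈ Ioo 0 τ) (h : HasDerivAt (fun η => f (x, η)) d t) :
    HasDerivAt (fun η => rectExtend l τ f x η) d t := by
  refine h.congr_of_eventuallyEq ?_
  filter_upwards [isOpen_Ioo.mem_nhds ht] with η hη
  exact rectExtend_eq f (Ioo_subset_Icc_self hx) (Ioo_subset_Icc_self hη)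

/-- In the open rectangle, the derivative within the closed rectangle is an honest derivative. -/
lemma hasFDerivAt_of_interior {l τ : ℝ} {f : ℝ × ℝ → ℝ}
    (hf : ContDiffOn ℝ 1 f (Icc 0 l ×ˢ Icc 0 τ)) {x t : ℝ}
    (hx : x ∈ Ioo 0 l) (ht : t ∈ Ioo 0 τ) :
    HasFDerivAt f (fderivWithin ℝ f (Icc 0 l ×ˢ Icc 0 τ) (x, t)) (x, t) := by
  have hn : Icc 0 l ×ˢ Icc 0 τ ∈ 𝓝 (x, t) :=
    prod_mem_nhds (Icc_mem_nhds hx.1 hx.2) (Icc_mem_nhds ht.1 ht.2)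
  have hd := hf.differentiableOn one_ne_zero (x, t)
    ⟨Ioo_subset_Icc_self hx, Ioo_subset_Icc_self ht⟩
  exact hd.hasFDerivWithinAt.hasFDerivAt hn

lemma hasDerivAt_fst {l τ : ℝ} {f : ℝ × ℝ → ℝ}
    (hf : ContDiffOn ℝ 1 f (Icc 0 l ×ˢ Icc 0 τ)) {x t : ℝ}
    (hx : x ∈ Ioo 0 l) (ht : t ∈ Ioo 0 τ) :
    HasDerivAt (fun ξ => f (ξ, t))
      (fderivWithin ℝ f (Icc 0 l ×ˢ Icc 0 τ) (x, t) (1, 0)) x :=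
  (hasFDerivAt_of_interior hf hx ht).comp_hasDerivAt x
    ((hasDerivAt_id x).prodMk (hasDerivAt_const x t))

lemma hasDerivAt_snd {l τ : ℝ} {f : ℝ × ℝ → ℝ}
    (hf : ContDiffOn ℝ 1 f (Icc 0 l ×ˢ Icc 0 τ)) {x t : ℝ}
    (hx : x ∈ Ioo 0 l) (ht : t ∈ Ioo 0 τ) :
    HasDerivAt (fun η => f (x, η))
      (fderivWithin ℝ f (Icc 0 l ×ˢ Icc 0 τ) (x, t) (0, 1)) t :=
  (hasFDerivAt_of_interior hf hx ht).comp_hasDerivAt t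
    ((hasDerivAt_const t x).prodMk (hasDerivAt_id t))

lemma contDiffOn_rect_fderivWithin_apply {l τ : ℝ} (hl : 0 < l) (hτ : 0 < τ) {f : ℝ × ℝ → ℝ}
    {m n : WithTop ℕ∞} (hf : ContDiffOn ℝ n f (Icc 0 l ×ˢ Icc 0 τ)) (hmn : m + 1 ≤ n)
    (v : ℝ × ℝ) :
    ContDiffOn ℝ m (fun p => fderivWithin ℝ f (Icc 0 l ×ˢ Icc 0 τ) p v)
      (Icc 0 l ×ˢ Icc 0 τ) :=
  (hf.fderivWithin ((uniqueDiffOn_Icc hl).prod (uniqueDiffOn_Icc hτ)) hmn).clm_apply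
    contDiffOn_const

/-- Congruence for double integrals of functions agreeing on the open rectangle. -/
lemma double_integral_congr {l τ : ℝ} (hl : 0 < l) (hτ : 0 < τ) {f g : ℝ → ℝ → ℝ}
    (h : ∀ t ∈ Ioo 0 τ, ∀ x ∈ Ioo 0 l, f x t = g x t) :
    ∫ t in (0:ℝ)..τ, ∫ x in (0:ℝ)..l, f x t = ∫ t in (0:ℝ)..τ, ∫ x in (0:ℝ)..l, g x t :=
  intervalIntegral.integral_congr_Ioo_of_le hτ.le fun t ht =>
    intervalIntegral.integral_congr_Ioo_of_le hl.le fun x hx => h t ht x hx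

/-- The integration by parts for globally continuous functions; `Bx`, `Bt`, `Ux`, `Ut`, `Uxx` are
the derivatives named by their suffixes, in the open rectangle only. -/
lemma core_identity {l τ : ℝ} (hl : 0 < l) (hτ : 0 < τ) {B Bx Bt U Ux Ut Uxx : ℝ → ℝ → ℝ}
    (cB : Continuous (fun p : ℝ × ℝ => B p.1 p.2))
    (cBx : Continuous (fun p : ℝ × ℝ => Bx p.1 p.2))
    (cBt : Continuous (fun p : ℝ × ℝ => Bt p.1 p.2))
    (cU : Continuous (fun p : ℝ × ℝ => U p.1 p.2))
    (cUx : Continuous (fun p : ℝ × ℝ => Ux p.1 p.2))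
    (cUt : Continuous (fun p : ℝ × ℝ => Ut p.1 p.2))
    (cUxx : Continuous (fun p : ℝ × ℝ => Uxx p.1 p.2))
    (dBx : ∀ t ∈ Ioo 0 τ, ∀ x ∈ Ioo 0 l, HasDerivAt (fun ξ => B ξ t) (Bx x t) x)
    (dBt : ∀ t ∈ Ioo 0 τ, ∀ x ∈ Ioo 0 l, HasDerivAt (fun η => B x η) (Bt x t) t)
    (dUx : ∀ t ∈ Ioo 0 τ, ∀ x ∈ Ioo 0 l, HasDerivAt (fun ξ => U ξ t) (Ux x t) x)
    (dUt : ∀ t ∈ Ioo 0 τ, ∀ x ∈ Ioo 0 l, HasDerivAt (fun η => U x η) (Ut x t) t)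
    (dUxx : ∀ t ∈ Ioo 0 τ, ∀ x ∈ Ioo 0 l, HasDerivAt (fun ξ => Ux ξ t) (Uxx x t) x)
    (hU0 : ∀ t ∈ Ioo 0 τ, U 0 t = 0) :
    -(∫ t in (0:ℝ)..τ, ∫ x in (0:ℝ)..l,
        (Bx x t * Ux x t + B x t * Uxx x t) * x * (∫ ξ in x..l, Ut ξ t)) =
      (1 / 2) * (∫ x in (0:ℝ)..l, B x τ * (U x τ) ^ 2)
        - (1 / 2) * (∫ x in (0:ℝ)..l, B x 0 * (U x 0) ^ 2)
        - (1 / 2) * (∫ t in (0:ℝ)..τ, ∫ x in (0:ℝ)..l, Bt x t * (U x t) ^ 2)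
        - (∫ t in (0:ℝ)..τ, ∫ x in (0:ℝ)..l, Bx x t * U x t * (∫ ξ in x..l, Ut ξ t))
        - ∫ t in (0:ℝ)..τ, ∫ x in (0:ℝ)..l, x * B x t * Ux x t * Ut x t := by
  obtain ⟨V, hV⟩ : ∃ V : ℝ → ℝ → ℝ, ∀ x t, V x t = ∫ ξ in x..l, Ut ξ t := ⟨_, fun _ _ => rfl⟩
  have cV : Continuous (fun p : ℝ × ℝ => V p.1 p.2) := by
    have h : Continuous fun p : ℝ × ℝ => ∫ ξ in l..p.1, Ut ξ p.2 :=
      intervalIntegral.continuous_parametric_intervalIntegral_of_continuous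
        (f := fun (p : ℝ × ℝ) ξ => Ut ξ p.2)
        (cUt.comp (by fun_prop : Continuous fun q : (ℝ × ℝ) × ℝ => (q.2, q.1.2))) continuous_fst
    refine h.neg.congr fun p => ?_
    rw [hV, intervalIntegral.integral_symm, Pi.neg_apply]
  have hVl : ∀ t, V l t = 0 := fun t => by simp [hV]
  -- A function continuous on the plane is continuous in each variable.
  have sx : ∀ {f : ℝ → ℝ → ℝ}, Continuous (fun p : ℝ × ℝ => f p.1 p.2) →
      ∀ t, Continuous fun x => f x t := fun h t =>
    h.comp (by fun_prop : Continuous fun x : ℝ => (x, t))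
  have st : ∀ {f : ℝ → ℝ → ℝ}, Continuous (fun p : ℝ × ℝ => f p.1 p.2) →
      ∀ x, Continuous fun t => f x t := fun h x =>
    h.comp (by fun_prop : Continuous fun t : ℝ => (x, t))
  have si : ∀ {f : ℝ → ℝ → ℝ}, Continuous (fun p : ℝ × ℝ => f p.1 p.2) →
      Continuous fun t => ∫ x in (0:ℝ)..l, f x t := fun {f} h =>
    intervalIntegral.continuous_parametric_intervalIntegral_of_continuous'
      (f := fun t x => f x t) (h.comp continuous_swap) 0 l
  have dV : ∀ t x, HasDerivAt (fun ξ => V ξ t) (-Ut x t) x := fun t x => by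
    have h := intervalIntegral.integral_hasDerivAt_left
      ((sx cUt t).intervalIntegrable x l)
      ((sx cUt t).stronglyMeasurableAtFilter volume (𝓝 x)) (sx cUt t).continuousAt
    simpa only [hV] using h
  simp only [← hV]
  have c1 : Continuous (fun p : ℝ × ℝ =>
      (Bx p.1 p.2 * Ux p.1 p.2 + B p.1 p.2 * Uxx p.1 p.2) * p.1 * V p.1 p.2) := by fun_prop
  have c2 : Continuous (fun p : ℝ × ℝ => p.1 * B p.1 p.2 * Ux p.1 p.2 * Ut p.1 p.2) := by
    fun_prop
  have c3 : Continuous (fun p : ℝ × ℝ => Bx p.1 p.2 * U p.1 p.2 * V p.1 p.2) := by fun_prop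
  have c4 : Continuous (fun p : ℝ × ℝ => B p.1 p.2 * U p.1 p.2 * Ut p.1 p.2) := by fun_prop
  have c5 : Continuous (fun p : ℝ × ℝ => Bt p.1 p.2 * U p.1 p.2 ^ 2) := by fun_prop
  have c6 : Continuous (fun p : ℝ × ℝ => B p.1 p.2 * U p.1 p.2 ^ 2) := by fun_prop
  have i1 := fun t => (sx (f := fun x t => (Bx x t * Ux x t + B x t * Uxx x t) * x * V x t)
    c1 t).intervalIntegrable (μ := volume) 0 l
  have i2 := fun t => (sx (f := fun x t => x * B x t * Ux x t * Ut x t)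
    c2 t).intervalIntegrable (μ := volume) 0 l
  have i3 := fun t => (sx (f := fun x t => Bx x t * U x t * V x t)
    c3 t).intervalIntegrable (μ := volume) 0 l
  have i4 := fun t => (sx (f := fun x t => B x t * U x t * Ut x t)
    c4 t).intervalIntegrable (μ := volume) 0 l
  have i5 := fun t => (sx (f := fun x t => Bt x t * U x t ^ 2)
    c5 t).intervalIntegrable (μ := volume) 0 l
  have j2 := (si (f := fun x t => x * B x t * Ux x t * Ut x t)
    c2).intervalIntegrable (μ := volume) 0 τ
  have j3 := (si (f := fun x t => Bx x t * U x t * V x t)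
    c3).intervalIntegrable (μ := volume) 0 τ
  have j4 := (si (f := fun x t => B x t * U x t * Ut x t)
    c4).intervalIntegrable (μ := volume) 0 τ
  have j5 := (si (f := fun x t => Bt x t * U x t ^ 2)
    c5).intervalIntegrable (μ := volume) 0 τ
  have space : ∀ t ∈ Ioo 0 τ,
      ∫ x in (0:ℝ)..l, (Bx x t * Ux x t + B x t * Uxx x t) * x * V x t =
        (∫ x in (0:ℝ)..l, x * B x t * Ux x t * Ut x t)
          + (∫ x in (0:ℝ)..l, Bx x t * U x t * V x t)
          - ∫ x in (0:ℝ)..l, B x t * U x t * Ut x t := by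
    intro t ht
    have ftc := intervalIntegral.integral_eq_sub_of_hasDerivAt_of_le hl.le
      (f := fun x => x * B x t * Ux x t * V x t - B x t * U x t * V x t)
      (f' := fun x => (Bx x t * Ux x t + B x t * Uxx x t) * x * V x t
        - x * B x t * Ux x t * Ut x t - Bx x t * U x t * V x t + B x t * U x t * Ut x t)
      (by
        have := sx cB t
        have := sx cU t
        have := sx cUx t
        have := sx cV t
        fun_prop)
      (fun x hx => by
        refine (((((hasDerivAt_id' x).fun_mul (dBx t ht x hx)).fun_mul
          (dUxx t ht x hx)).fun_mul (dV t x)).fun_sub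
          (((dBx t ht x hx).fun_mul (dUx t ht x hx)).fun_mul (dV t x))).congr_deriv ?_
        ring)
      ((((i1 t).sub (i2 t)).sub (i3 t)).add (i4 t))
    rw [intervalIntegral.integral_add (((i1 t).sub (i2 t)).sub (i3 t)) (i4 t),
      intervalIntegral.integral_sub ((i1 t).sub (i2 t)) (i3 t),
      intervalIntegral.integral_sub (i1 t) (i2 t)] at ftc
    simp only [hVl, hU0 t ht] at ftc
    linarith
  have time : (∫ x in (0:ℝ)..l, B x τ * U x τ ^ 2) - (∫ x in (0:ℝ)..l, B x 0 * U x 0 ^ 2) =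
      (∫ t in (0:ℝ)..τ, ∫ x in (0:ℝ)..l, Bt x t * U x t ^ 2)
        + 2 * ∫ t in (0:ℝ)..τ, ∫ x in (0:ℝ)..l, B x t * U x t * Ut x t := by
    have cF : Continuous (fun p : ℝ × ℝ =>
        Bt p.1 p.2 * U p.1 p.2 ^ 2 + 2 * (B p.1 p.2 * U p.1 p.2 * Ut p.1 p.2)) := by fun_prop
    have swap : ∫ x in (0:ℝ)..l, ∫ t in (0:ℝ)..τ,
          (Bt x t * U x t ^ 2 + 2 * (B x t * U x t * Ut x t)) =
        ∫ t in (0:ℝ)..τ, ∫ x in (0:ℝ)..l,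
          (Bt x t * U x t ^ 2 + 2 * (B x t * U x t * Ut x t)) := by
      refine intervalIntegral_intervalIntegral_swap ?_
      have hint := (cF.continuousOn (s := uIcc 0 l ×ˢ uIcc 0 τ)).integrableOn_compact
        (μ := volume) (isCompact_uIcc.prod isCompact_uIcc)
      exact hint.mono_set (prod_mono uIoc_subset_uIcc uIoc_subset_uIcc)
    rw [← intervalIntegral.integral_sub
        ((sx (f := fun x t => B x t * U x t ^ 2) c6 τ).intervalIntegrable 0 l)
        ((sx (f := fun x t => B x t * U x t ^ 2) c6 0).intervalIntegrable 0 l),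
      ← intervalIntegral.integral_const_mul, ← intervalIntegral.integral_add j5 (j4.const_mul 2)]
    trans ∫ x in (0:ℝ)..l, ∫ t in (0:ℝ)..τ,
          (Bt x t * U x t ^ 2 + 2 * (B x t * U x t * Ut x t))
    · refine intervalIntegral.integral_congr_Ioo_of_le hl.le fun x hx => ?_
      refine (intervalIntegral.integral_eq_sub_of_hasDerivAt_of_le hτ.le
        (f := fun t => B x t * U x t ^ 2)
        (st (f := fun x t => B x t * U x t ^ 2) c6 x).continuousOn (fun t ht => ?_)
        ((st (f := fun x t => Bt x t * U x t ^ 2 + 2 * (B x t * U x t * Ut x t))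
          cF x).intervalIntegrable 0 τ)).symm
      refine ((dBt t ht x hx).fun_mul ((dUt t ht x hx).fun_pow 2)).congr_deriv ?_
      push_cast
      ring
    · rw [swap]
      refine intervalIntegral.integral_congr fun t _ => ?_
      rw [intervalIntegral.integral_add (i5 t) ((i4 t).const_mul 2),
        intervalIntegral.integral_const_mul]
  rw [intervalIntegral.integral_congr_Ioo_of_le hτ.le space,
    intervalIntegral.integral_sub (j2.add j3) j4, intervalIntegral.integral_add j2 j3]
  linarith

/-- Identity (10): for `b` of class `C¹` and `u` of class `C²` on `[0,l] × [0,τ]`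
with `u(0,t) = 0`,
`−∫₀^τ∫₀ˡ (b u_x)_x · x · (∫ₓˡ u_t dξ) dx dt
  = ½∫₀ˡ b(x,τ)u(x,τ)² dx − ½∫₀ˡ b(x,0)u(x,0)² dx − ½∫₀^τ∫₀ˡ b_t u² dx dt
    − ∫₀^τ∫₀ˡ b_x u (∫ₓˡ u_t dξ) dx dt − ∫₀^τ∫₀ˡ x b u_x u_t dx dt`. -/
theorem stmt_3 (l τ : ℝ) (hl : 0 < l) (hτ : 0 < τ) (b u : ℝ → ℝ → ℝ)
    (hb : ContDiffOn ℝ 1 (Function.uncurry b) (Set.Icc 0 l ×ˢ Set.Icc 0 τ))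
    (hu : ContDiffOn ℝ 2 (Function.uncurry u) (Set.Icc 0 l ×ˢ Set.Icc 0 τ))
    (hu0 : ∀ t ∈ Set.Icc (0:ℝ) τ, u 0 t = 0) :
    -(∫ t in (0:ℝ)..τ, ∫ x in (0:ℝ)..l,
        pderivX (fun ξ η => b ξ η * pderivX u ξ η) x t * x *
          (∫ ξ in x..l, pderivT u ξ t)) =
      (1 / 2) * (∫ x in (0:ℝ)..l, b x τ * (u x τ) ^ 2)
        - (1 / 2) * (∫ x in (0:ℝ)..l, b x 0 * (u x 0) ^ 2)
        - (1 / 2) * (∫ t in (0:ℝ)..τ, ∫ x in (0:ℝ)..l, pderivT b x t * (u x t) ^ 2)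
        - (∫ t in (0:ℝ)..τ, ∫ x in (0:ℝ)..l,
            pderivX b x t * u x t * (∫ ξ in x..l, pderivT u ξ t))
        - ∫ t in (0:ℝ)..τ, ∫ x in (0:ℝ)..l,
            x * b x t * pderivX u x t * pderivT u x t := by
  set S : Set (ℝ × ℝ) := Icc 0 l ×ˢ Icc 0 τ with hS
  have hu1 : ContDiffOn ℝ 1 (Function.uncurry u) S := hu.of_le one_le_two
  have two : (1 : WithTop ℕ∞) + 1 ≤ 2 := one_add_one_eq_two.le
  have one : (0 : WithTop ℕ∞) + 1 ≤ 1 := (zero_add 1).le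
  set bx : ℝ × ℝ → ℝ := fun p => fderivWithin ℝ (Function.uncurry b) S p (1, 0) with hbx
  set bt : ℝ × ℝ → ℝ := fun p => fderivWithin ℝ (Function.uncurry b) S p (0, 1) with hbt
  set ux : ℝ × ℝ → ℝ := fun p => fderivWithin ℝ (Function.uncurry u) S p (1, 0) with hux
  set ut : ℝ × ℝ → ℝ := fun p => fderivWithin ℝ (Function.uncurry u) S p (0, 1) with hut
  set uxx : ℝ × ℝ → ℝ := fun p => fderivWithin ℝ ux S p (1, 0) with huxx
  have cbx : ContinuousOn bx S := (contDiffOn_rect_fderivWithin_apply hl hτ hb one _).continuousOn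
  have cbt : ContinuousOn bt S := (contDiffOn_rect_fderivWithin_apply hl hτ hb one _).continuousOn
  have cux : ContDiffOn ℝ 1 ux S := contDiffOn_rect_fderivWithin_apply hl hτ hu two _
  have cut : ContDiffOn ℝ 1 ut S := contDiffOn_rect_fderivWithin_apply hl hτ hu two _
  have cuxx : ContinuousOn uxx S := (contDiffOn_rect_fderivWithin_apply hl hτ cux one _).continuousOn
  have e : ∀ (f : ℝ × ℝ → ℝ), ∀ t ∈ Ioo 0 τ, ∀ x ∈ Ioo 0 l, rectExtend l τ f x t = f (x, t) :=
    fun f t ht x hx => rectExtend_eq f (Ioo_subset_Icc_self hx) (Ioo_subset_Icc_self ht)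
  have key := core_identity hl hτ
    (continuous_rectExtend hl hτ hb.continuousOn) (continuous_rectExtend hl hτ cbx)
    (continuous_rectExtend hl hτ cbt) (continuous_rectExtend hl hτ hu.continuousOn)
    (continuous_rectExtend hl hτ cux.continuousOn) (continuous_rectExtend hl hτ cut.continuousOn)
    (continuous_rectExtend hl hτ cuxx)
    (fun t ht x hx => by
      rw [e _ t ht x hx]; exact rectExtend_hasDerivAt_fst hx ht (hasDerivAt_fst hb hx ht))
    (fun t ht x hx => by
      rw [e _ t ht x hx]; exact rectExtend_hasDerivAt_snd hx ht (hasDerivAt_snd hb hx ht))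
    (fun t ht x hx => by
      rw [e _ t ht x hx]; exact rectExtend_hasDerivAt_fst hx ht (hasDerivAt_fst hu1 hx ht))
    (fun t ht x hx => by
      rw [e _ t ht x hx]; exact rectExtend_hasDerivAt_snd hx ht (hasDerivAt_snd hu1 hx ht))
    (fun t ht x hx => by
      rw [e _ t ht x hx]; exact rectExtend_hasDerivAt_fst hx ht (hasDerivAt_fst cux hx ht))
    (fun t ht => by
      rw [rectExtend_eq _ (left_mem_Icc.2 hl.le) (Ioo_subset_Icc_self ht)]
      exact hu0 t (Ioo_subset_Icc_self ht))
  have pbx : ∀ t ∈ Ioo 0 τ, ∀ x ∈ Ioo 0 l, pderivX b x t = bx (x, t) :=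
    fun t ht x hx => (hasDerivAt_fst hb hx ht).deriv
  have pbt : ∀ t ∈ Ioo 0 τ, ∀ x ∈ Ioo 0 l, pderivT b x t = bt (x, t) :=
    fun t ht x hx => (hasDerivAt_snd hb hx ht).deriv
  have pux : ∀ t ∈ Ioo 0 τ, ∀ x ∈ Ioo 0 l, pderivX u x t = ux (x, t) :=
    fun t ht x hx => (hasDerivAt_fst hu1 hx ht).deriv
  have put : ∀ t ∈ Ioo 0 τ, ∀ x ∈ Ioo 0 l, pderivT u x t = ut (x, t) :=
    fun t ht x hx => (hasDerivAt_snd hu1 hx ht).deriv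
  have pbux : ∀ t ∈ Ioo 0 τ, ∀ x ∈ Ioo 0 l,
      pderivX (fun ξ η => b ξ η * pderivX u ξ η) x t =
        bx (x, t) * ux (x, t) + b x t * uxx (x, t) := by
    intro t ht x hx
    refine (HasDerivAt.congr_of_eventuallyEq
      ((hasDerivAt_fst hb hx ht).mul (hasDerivAt_fst cux hx ht)) ?_).deriv
    filter_upwards [isOpen_Ioo.mem_nhds hx] with ξ hξ
    simp only [Pi.mul_apply, pux t ht ξ hξ, Function.uncurry]
  have pV : ∀ t ∈ Ioo 0 τ, ∀ x ∈ Ioo 0 l,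
      ∫ ξ in x..l, pderivT u ξ t = ∫ ξ in x..l, rectExtend l τ ut ξ t := by
    intro t ht x hx
    refine intervalIntegral.integral_congr_Ioo_of_le hx.2.le fun ξ hξ => ?_
    have hξ' : ξ ∈ Ioo 0 l := ⟨hx.1.trans hξ.1, hξ.2⟩
    simp only [put t ht ξ hξ', e ut t ht ξ hξ']
  have slice : ∀ t ∈ Icc 0 τ, ∫ x in (0:ℝ)..l, b x t * u x t ^ 2 =
      ∫ x in (0:ℝ)..l, rectExtend l τ (Function.uncurry b) x t *
        rectExtend l τ (Function.uncurry u) x t ^ 2 := by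
    intro t ht
    refine intervalIntegral.integral_congr_Ioo_of_le hl.le fun x hx => ?_
    simp only [rectExtend_eq _ (Ioo_subset_Icc_self hx) ht, Function.uncurry]
  rw [slice τ (right_mem_Icc.2 hτ.le), slice 0 (left_mem_Icc.2 hτ.le)]
  set B := rectExtend l τ (Function.uncurry b) with hB
  set U := rectExtend l τ (Function.uncurry u) with hU
  have eB : ∀ t ∈ Ioo 0 τ, ∀ x ∈ Ioo 0 l, B x t = b x t := e _
  have eU : ∀ t ∈ Ioo 0 τ, ∀ x ∈ Ioo 0 l, U x t = u x t := e _
  have E1 := double_integral_congr hl hτ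
    (f := fun x t =>
      pderivX (fun ξ η => b ξ η * pderivX u ξ η) x t * x * (∫ ξ in x..l, pderivT u ξ t))
    (g := fun x t =>
      (rectExtend l τ bx x t * rectExtend l τ ux x t + B x t * rectExtend l τ uxx x t) * x *
        (∫ ξ in x..l, rectExtend l τ ut ξ t))
    fun t ht x hx => by
      simp only [pbux t ht x hx, pV t ht x hx, eB t ht x hx, e _ t ht x hx]
  have E2 := double_integral_congr hl hτ
    (f := fun x t => pderivT b x t * (u x t) ^ 2)
    (g := fun x t => rectExtend l τ bt x t * U x t ^ 2)
    fun t ht x hx => by simp only [pbt t ht x hx, eU t ht x hx, e _ t ht x hx]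
  have E3 := double_integral_congr hl hτ
    (f := fun x t => pderivX b x t * u x t * (∫ ξ in x..l, pderivT u ξ t))
    (g := fun x t => rectExtend l τ bx x t * U x t * (∫ ξ in x..l, rectExtend l τ ut ξ t))
    fun t ht x hx => by
      simp only [pbx t ht x hx, pV t ht x hx, eU t ht x hx, e _ t ht x hx]
  have E4 := double_integral_congr hl hτ
    (f := fun x t => x * b x t * pderivX u x t * pderivT u x t)
    (g := fun x t => x * B x t * rectExtend l τ ux x t * rectExtend l τ ut x t)
    fun t ht x hx => by
      simp only [pux t ht x hx, put t ht x hx, eB t ht x hx, e _ t ht x hx]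
  rw [E1, E2, E3, E4]
  exact key
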